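/- For every k ≥ 1 and every Δ ∈ {≤, =}, every context-free language of index at most k can be generated by a CD grammar system with at most two context-free components working in the (t∧Δk)-mode: L_k(CF) ⊆ L(CD_2, CF[−λ], (t∧Δk)), both with and without erasing rules. -/

import Mathlib

namespace CDHybrid

/-- Symbols: nonterminals are natural numbers, terminals come from `T`. -/
abbrev Symb (T : Type) := ℕ ⊕ T

/-- Sentential forms. -/
abbrev SForm (T : Type) := List (Symb T)

/-- A context-free rule `A → z`. -/
abbrev Rule (T : Type) := ℕ × SForm T

/-- Number of nonterminal occurrences in a sentential form. -/
def ntCount {T : Type} (x : SForm T) : ℕ := (x.filter Sum.isLeft).length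

/-- One rewriting step using some rule of the rule set `P`. -/
def RStep {T : Type} (P : List (Rule T)) (x y : SForm T) : Prop :=
  ∃ r ∈ P, ∃ u v : SForm T, x = u ++ Sum.inl r.1 :: v ∧ y = u ++ r.2 ++ v

/-- `m`-step derivation using only rules of `P`. -/
def StepsN {T : Type} (P : List (Rule T)) : ℕ → SForm T → SForm T → Prop
  | 0, x, y => x = y
  | m + 1, x, y => ∃ z, RStep P x z ∧ StepsN P m z y

/-- `m`-step derivation using only rules of `P`, all intermediate (and the final)
sentential forms having at most `b` occurrences of nonterminals. -/
def StepsNB {T : Type} (P : List (Rule T)) (b : ℕ) : ℕ → SForm T → SForm T → Prop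
  | 0, x, y => x = y
  | m + 1, x, y => ∃ z, RStep P x z ∧ ntCount z ≤ b ∧ StepsNB P b m z y

/-- Derivation modes of CD grammar systems. -/
inductive Mode where
  | eq : ℕ → Mode
  | le : ℕ → Mode
  | ge : ℕ → Mode
  | star : Mode
  | t : Mode
  | conj : Mode → Mode → Mode

/-- The predicate of a derivation mode: `modeOK P f m y` holds if an `m`-step
derivation by the component `P` ending in `y` is acceptable for mode `f`. -/
def modeOK {T : Type} (P : List (Rule T)) : Mode → ℕ → SForm T → Prop
  | .eq k, m, _ => m = k
  | .le k, m, _ => m ≤ k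
  | .ge k, m, _ => k ≤ m
  | .star, _, _ => True
  | .t, _, y => ¬ ∃ z, RStep P y z
  | .conj f g, m, y => modeOK P f m y ∧ modeOK P g m y

/-- A CD grammar system with context-free components. -/
structure CDGS (T : Type) where
  deg : ℕ
  start : ℕ
  comp : Fin deg → List (Rule T)

/-- λ-freeness: no erasing rules. -/
def CDGS.LamFree {T : Type} (G : CDGS T) : Prop :=
  ∀ i : Fin G.deg, ∀ r ∈ G.comp i, r.2 ≠ []

/-- One derivation step of a component of `G` in mode `f`. -/
def CDGS.ModeStep {T : Type} (G : CDGS T) (f : Mode) (x y : SForm T) : Prop :=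
  ∃ i : Fin G.deg, ∃ m : ℕ, StepsN (G.comp i) m x y ∧ modeOK (G.comp i) f m y

/-- One derivation step of a component of `G` in mode `f`, with all produced
sentential forms having at most `b` nonterminal occurrences. -/
def CDGS.ModeStepB {T : Type} (G : CDGS T) (f : Mode) (b : ℕ) (x y : SForm T) : Prop :=
  ∃ i : Fin G.deg, ∃ m : ℕ, StepsNB (G.comp i) b m x y ∧ modeOK (G.comp i) f m y

/-- The language generated by `G` in mode `f`. -/
def CDGS.lang {T : Type} (G : CDGS T) (f : Mode) : Set (List T) :=
  { w | Relation.TransGen (G.ModeStep f) [Sum.inl G.start] (w.map Sum.inr) }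

/-- The words of the language of `G` in mode `f` possessing a derivation of index
at most `b`, i.e., all sentential forms occurring in it have at most `b`
nonterminal occurrences. -/
def CDGS.langB {T : Type} (G : CDGS T) (f : Mode) (b : ℕ) : Set (List T) :=
  { w | ntCount ([Sum.inl G.start] : SForm T) ≤ b ∧
      Relation.TransGen (G.ModeStepB f b) [Sum.inl G.start] (w.map Sum.inr) }

/-- Two languages are considered equal iff they differ at most in the empty word. -/
def EqL {T : Type} (L₁ L₂ : Set (List T)) : Prop := L₁ \ {[]} = L₂ \ {[]}

/-- The family `L(CD_n, CF[−λ], f)`; `lf = true` forbids erasing rules. -/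
def CDFam (T : Type) (lf : Bool) (n : ℕ) (f : Mode) : Set (Set (List T)) :=
  { L | ∃ G : CDGS T, G.deg ≤ n ∧ (lf = true → G.LamFree) ∧ EqL (G.lang f) L }

/-- The family `L(CD_∞, CF[−λ], f)`. -/
def CDFamInf (T : Type) (lf : Bool) (f : Mode) : Set (Set (List T)) :=
  { L | ∃ G : CDGS T, (lf = true → G.LamFree) ∧ EqL (G.lang f) L }

/-- The family `L_m(CD_n, CF[−λ], f)` of such languages of index at most `m`. -/
def CDFamInd (T : Type) (lf : Bool) (n : ℕ) (f : Mode) (m : ℕ) : Set (Set (List T)) :=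
  { L | ∃ G : CDGS T, G.deg ≤ n ∧ (lf = true → G.LamFree) ∧ EqL (G.lang f) L ∧
      G.lang f ⊆ G.langB f m }

/-- The family `L_m(CD_∞, CF[−λ], f)`. -/
def CDFamIndInf (T : Type) (lf : Bool) (f : Mode) (m : ℕ) : Set (Set (List T)) :=
  { L | ∃ G : CDGS T, (lf = true → G.LamFree) ∧ EqL (G.lang f) L ∧ G.lang f ⊆ G.langB f m }

/-- The family `L_fin(CD_∞, CF[−λ], f)`. -/
def CDFamFinInf (T : Type) (lf : Bool) (f : Mode) : Set (Set (List T)) :=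
  { L | ∃ m : ℕ, 1 ≤ m ∧ L ∈ CDFamIndInf T lf f m }

/-- A context-free grammar. -/
structure CFG (T : Type) where
  start : ℕ
  rules : List (Rule T)

/-- The language generated by a context-free grammar. -/
def CFG.lang {T : Type} (G : CFG T) : Set (List T) :=
  { w | Relation.ReflTransGen (RStep G.rules) [Sum.inl G.start] (w.map Sum.inr) }

/-- The words of `G.lang` having a derivation of index at most `m`. -/
def CFG.langB {T : Type} (G : CFG T) (m : ℕ) : Set (List T) :=
  { w | ntCount ([Sum.inl G.start] : SForm T) ≤ m ∧
      Relation.ReflTransGen (fun x y => RStep G.rules x y ∧ ntCount y ≤ m)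
        [Sum.inl G.start] (w.map Sum.inr) }

/-- The family `L(CF)` of context-free languages. -/
def CFFam (T : Type) : Set (Set (List T)) := { L | ∃ G : CFG T, EqL G.lang L }

/-- The family `L_m(CF)` of context-free languages of index at most `m`. -/
def CFFamInd (T : Type) (m : ℕ) : Set (Set (List T)) :=
  { L | ∃ G : CFG T, EqL G.lang L ∧ G.lang ⊆ G.langB m }

/-- The family `L_fin(CF)` of context-free languages of finite index. -/
def CFFamFin (T : Type) : Set (Set (List T)) :=
  { L | ∃ m : ℕ, 1 ≤ m ∧ L ∈ CFFamInd T m }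

/-- A grammar is linear if every right-hand side contains at most one nonterminal. -/
def CFG.Linear {T : Type} (G : CFG T) : Prop := ∀ r ∈ G.rules, ntCount r.2 ≤ 1

/-- The family `L(LIN)` of linear context-free languages. -/
def LinFam (T : Type) : Set (Set (List T)) :=
  { L | ∃ G : CFG T, G.Linear ∧ EqL G.lang L }

/-- The family `L(FIN)` of finite languages. -/
def FinFam (T : Type) : Set (Set (List T)) := { L | L.Finite }

/-- A programmed grammar with context-free rules. -/
structure PG (T : Type) where
  start : ℕ
  nLab : ℕ
  rule : Fin nLab → Rule T
  succ : Fin nLab → Set (Fin nLab)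
  fail : Fin nLab → Set (Fin nLab)

def PG.LamFree {T : Type} (G : PG T) : Prop := ∀ r : Fin G.nLab, (G.rule r).2 ≠ []

/-- No appearance checking: all failure fields are empty. -/
def PG.NoAC {T : Type} (G : PG T) : Prop := ∀ r : Fin G.nLab, G.fail r = ∅

/-- One step of a programmed grammar on pairs (sentential form, label). -/
def PG.PStep {T : Type} (G : PG T) (p q : SForm T × Fin G.nLab) : Prop :=
  (∃ u v : SForm T, p.1 = u ++ Sum.inl (G.rule p.2).1 :: v ∧
      q.1 = u ++ (G.rule p.2).2 ++ v ∧ q.2 ∈ G.succ p.2) ∨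
  (Sum.inl (G.rule p.2).1 ∉ p.1 ∧ q.1 = p.1 ∧ q.2 ∈ G.fail p.2)

/-- The language generated by a programmed grammar. -/
def PG.lang {T : Type} (G : PG T) : Set (List T) :=
  { w | ∃ r₁ r₂ : Fin G.nLab,
      Relation.ReflTransGen G.PStep ([Sum.inl G.start], r₁) (w.map Sum.inr, r₂) }

/-- The words of `G.lang` having a derivation of index at most `m`. -/
def PG.langB {T : Type} (G : PG T) (m : ℕ) : Set (List T) :=
  { w | ∃ r₁ r₂ : Fin G.nLab, ntCount ([Sum.inl G.start] : SForm T) ≤ m ∧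
      Relation.ReflTransGen (fun p q => G.PStep p q ∧ ntCount q.1 ≤ m)
        ([Sum.inl G.start], r₁) (w.map Sum.inr, r₂) }

/-- The family `L_m(P, CF[−λ][, ac])`: programmed languages of index at most `m`;
`ac = false` forbids appearance checking, `lf = true` forbids erasing rules. -/
def PFamInd (T : Type) (lf ac : Bool) (m : ℕ) : Set (Set (List T)) :=
  { L | ∃ G : PG T, (lf = true → G.LamFree) ∧ (ac = false → G.NoAC) ∧
      EqL G.lang L ∧ G.lang ⊆ G.langB m }

/-- The family `L_fin(P, CF[−λ][, ac])` of programmed languages of finite index. -/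
def PFamFin (T : Type) (lf ac : Bool) : Set (Set (List T)) :=
  { L | ∃ m : ℕ, 1 ≤ m ∧ L ∈ PFamInd T lf ac m }

/-!
First remove the erasing rules. In a derivation of a nonempty word, deleting from every sentential
form the nonterminal occurrences that end up producing the empty word only shortens the forms, so
the standard λ-free grammar generates the word with the same bound on the index.

Then take two copies of the nonterminals, in two colours, one component for each colour. On a form
`x` of its own colour a component must rewrite every nonterminal, since the `t`-mode forbids it to
stop earlier. Rewriting one occurrence by a rule of the grammar and recolouring all the others takes
as many steps as `x` has nonterminals, which is at most `k`, and an idling rule fills up the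
remaining steps so that their number is exactly `k`. Conversely, forgetting the colours turns every
step of a component into at most one step of the grammar, so nothing else is generated.
-/

section

open Relation

variable {T : Type} {P : List (Rule T)} {u v w x x' y y' z : SForm T} {A k m n : ℕ} {b : Bool}

@[simp]
theorem ntCount_cons_inl : ntCount (Sum.inl A :: x) = ntCount x + 1 := rfl

@[simp]
theorem ntCount_cons_inr (a : T) : ntCount (Sum.inr a :: x) = ntCount x := rfl

@[simp]
theorem ntCount_append : ntCount (x ++ y) = ntCount x + ntCount y := by
  simp [ntCount]

theorem ntCount_le_of_sublist (h : x.Sublist y) : ntCount x ≤ ntCount y :=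
  (h.filter _).length_le

/-- Derivability `x ⇒* y` by the rules of `P`. -/
abbrev Derives (P : List (Rule T)) : SForm T → SForm T → Prop :=
  ReflTransGen (RStep P)

/-- Derivability by the rules of `P` through sentential forms with at most `k` nonterminal
occurrences. As in `CFG.langB`, the first form is not subject to the bound. -/
abbrev DerivesB (P : List (Rule T)) (k : ℕ) : SForm T → SForm T → Prop :=
  ReflTransGen fun x y => RStep P x y ∧ ntCount y ≤ k

theorem DerivesB.derives (h : DerivesB P k x y) : Derives P x y :=
  ReflTransGen.mono (fun _ _ => And.left) x y h

theorem not_rstep_nil : ¬ RStep P [] x := by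
  rintro ⟨r, -, u, v, h, -⟩
  simp at h

theorem RStep.append_append (h : RStep P x y) (u v : SForm T) :
    RStep P (u ++ x ++ v) (u ++ y ++ v) := by
  obtain ⟨r, hr, u', v', rfl, rfl⟩ := h
  exact ⟨r, hr, u ++ u', v' ++ v, by simp, by simp⟩

theorem Derives.append_append (h : Derives P x y) (u v : SForm T) :
    Derives P (u ++ x ++ v) (u ++ y ++ v) :=
  ReflTransGen.lift (u ++ · ++ v) (fun _ _ h => h.append_append u v) x y h

theorem StepsN.derives (h : StepsN P m x y) : Derives P x y := by
  induction m generalizing x with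
  | zero => exact h ▸ .refl
  | succ m ih =>
    obtain ⟨z, hxz, hzy⟩ := h
    exact .head hxz (ih hzy)

theorem StepsN.trans (hxy : StepsN P m x y) (hyz : StepsN P n y z) : StepsN P (m + n) x z := by
  induction m generalizing x with
  | zero => obtain rfl : x = y := hxy; rwa [Nat.zero_add]
  | succ m ih =>
    obtain ⟨x', hxx', hx'y⟩ := hxy
    rw [Nat.succ_add]
    exact ⟨x', hxx', ih hx'y⟩

theorem StepsN.append_append (h : StepsN P m x y) (u v : SForm T) :
    StepsN P m (u ++ x ++ v) (u ++ y ++ v) := by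
  induction m generalizing x with
  | zero => exact congrArg (u ++ · ++ v) h
  | succ m ih =>
    obtain ⟨z, hxz, hzy⟩ := h
    exact ⟨_, hxz.append_append u v, ih hzy⟩

theorem StepsN.append (hx : StepsN P m x x') (hy : StepsN P n y y') :
    StepsN P (m + n) (x ++ y) (x' ++ y') := by
  have hleft : StepsN P m (x ++ y) (x' ++ y) := hx.append_append [] y
  have hright : StepsN P n (x' ++ y) (x' ++ y') := by simpa using hy.append_append x' []
  exact hleft.trans hright

theorem RStep.stepsN_one (h : RStep P x y) : StepsN P 1 x y :=
  ⟨y, h, rfl⟩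

theorem RStep.stepsN_self (h : RStep P x x) (m : ℕ) : StepsN P m x x := by
  induction m with
  | zero => rfl
  | succ m ih => exact ⟨x, h, ih⟩

/-! ### Elimination of erasing rules -/

/-- A nonterminal is nullable if the empty word can be derived from it. -/
def Nullable (P : List (Rule T)) (A : ℕ) : Prop :=
  Derives P [Sum.inl A] []

/-- `Erasure P x y` says that `y` arises from `x` by deleting some (possibly no) occurrences of
nullable nonterminals. -/
inductive Erasure (P : List (Rule T)) : SForm T → SForm T → Prop
  | nil : Erasure P [] []
  | keep (s : Symb T) {x y : SForm T} : Erasure P x y → Erasure P (s :: x) (s :: y)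
  | drop {A : ℕ} {x y : SForm T} : Nullable P A → Erasure P x y → Erasure P (Sum.inl A :: x) y

namespace Erasure

theorem refl (x : SForm T) : Erasure P x x := by
  induction x with
  | nil => exact .nil
  | cons s x ih => exact .keep s ih

theorem append (hx : Erasure P x x') (hy : Erasure P y y') : Erasure P (x ++ y) (x' ++ y') := by
  induction hx with
  | nil => exact hy
  | keep s _ ih => exact .keep s ih
  | drop hA _ ih => exact .drop hA ih

theorem exists_of_append (h : Erasure P (x ++ y) z) :
    ∃ x' y', z = x' ++ y' ∧ Erasure P x x' ∧ Erasure P y y' := by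
  induction x generalizing z with
  | nil => exact ⟨[], z, rfl, .nil, h⟩
  | cons s x ih =>
    cases h with
    | keep _ h =>
      obtain ⟨x', y', rfl, hx, hy⟩ := ih h
      exact ⟨s :: x', y', rfl, .keep s hx, hy⟩
    | drop hA h =>
      obtain ⟨x', y', rfl, hx, hy⟩ := ih h
      exact ⟨x', y', rfl, .drop hA hx, hy⟩

theorem eq_or_eq_nil_of_singleton {s : Symb T} (h : Erasure P [s] y) : y = [s] ∨ y = [] := by
  cases h with
  | keep _ h => cases h; exact .inl rfl
  | drop _ h => cases h; exact .inr rfl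

theorem derives (h : Erasure P x y) : Derives P x y := by
  induction h with
  | nil => exact .refl
  | keep s _ ih => simpa using ih.append_append [s] []
  | @drop A x y hA _ ih =>
    have hAx : Derives P (Sum.inl A :: x) x := by simpa using Derives.append_append hA [] x
    exact hAx.trans ih

theorem sublist (h : Erasure P x y) : y.Sublist x := by
  induction h with
  | nil => exact .slnil
  | keep s _ ih => exact ih.cons_cons s
  | drop _ _ ih => exact ih.cons _

end Erasure

open Classical in
/-- The nonerasing rules `A → z'` where `z'` is an erasure of `z` for some rule `A → z` of `P`:
the usual rule set of the λ-free grammar equivalent to a given one. -/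
noncomputable def lambdaFreeRules (P : List (Rule T)) : List (Rule T) :=
  P.flatMap fun r =>
    (r.2.sublists.filter fun z => Erasure P r.2 z ∧ z ≠ []).map fun z => (r.1, z)

theorem mem_lambdaFreeRules : (A, z) ∈ lambdaFreeRules P ↔
    ∃ r ∈ P, A = r.1 ∧ Erasure P r.2 z ∧ z ≠ [] := by
  simp only [lambdaFreeRules, List.mem_flatMap, List.mem_map, List.mem_filter, List.mem_sublists,
    decide_eq_true_eq, Prod.mk.injEq]
  constructor
  · rintro ⟨r, hr, z, ⟨-, hz⟩, rfl, rfl⟩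
    exact ⟨r, hr, rfl, hz⟩
  · rintro ⟨r, hr, rfl, hz⟩
    exact ⟨r, hr, z, ⟨hz.1.sublist, hz⟩, rfl, rfl⟩

theorem derives_of_rstep_lambdaFreeRules (h : RStep (lambdaFreeRules P) x y) :
    Derives P x y := by
  obtain ⟨⟨A, z⟩, hs, u, v, rfl, rfl⟩ := h
  obtain ⟨r, hr, rfl, hz, -⟩ := mem_lambdaFreeRules.1 hs
  exact .head ⟨r, hr, u, v, rfl, rfl⟩ (hz.derives.append_append u v)

/-- Erasures can be pulled back along a step: erase the rewritten nonterminal as well if nothing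
is left of the right-hand side, and otherwise use the shortened rule. -/
theorem RStep.exists_erasure (h : RStep P x x') (h' : Erasure P x' y') :
    ∃ y, Erasure P x y ∧ (y = y' ∨ RStep (lambdaFreeRules P) y y') := by
  obtain ⟨r, hr, u, v, rfl, rfl⟩ := h
  obtain ⟨_, v', rfl, huz, hv⟩ := h'.exists_of_append
  obtain ⟨u', z', rfl, hu, hz⟩ := huz.exists_of_append
  by_cases hz' : z' = []
  · subst hz'
    have hnull : Nullable P r.1 := .head ⟨r, hr, [], [], rfl, by simp⟩ hz.derives
    exact ⟨u' ++ v', hu.append (.drop hnull hv), .inl (by simp)⟩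
  · exact ⟨u' ++ Sum.inl r.1 :: v', hu.append (.keep _ hv),
      .inr ⟨(r.1, z'), mem_lambdaFreeRules.2 ⟨r, hr, rfl, hz, hz'⟩, u', v', rfl, rfl⟩⟩

theorem DerivesB.exists_erasure (h : DerivesB P k x w) :
    ∃ y, Erasure P x y ∧ DerivesB (lambdaFreeRules P) k y w := by
  induction h using ReflTransGen.head_induction_on with
  | refl => exact ⟨w, .refl w, .refl⟩
  | head h _ ih =>
    obtain ⟨y', hy', hw⟩ := ih
    obtain ⟨y, hy, rfl | hstep⟩ := h.1.exists_erasure hy'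
    · exact ⟨y, hy, hw⟩
    · exact ⟨y, hy, .head ⟨hstep, (ntCount_le_of_sublist hy'.sublist).trans h.2⟩ hw⟩

/-- The λ-free grammar equivalent to `G` up to the empty word. -/
noncomputable def CFG.lambdaFree (G : CFG T) : CFG T :=
  ⟨G.start, lambdaFreeRules G.rules⟩

theorem CFG.lambdaFree_rhs_ne_nil (G : CFG T) : ∀ r ∈ G.lambdaFree.rules, r.2 ≠ [] := by
  intro r hr
  obtain ⟨_, _, _, _, hne⟩ := mem_lambdaFreeRules.1 hr
  exact hne

theorem CFG.lambdaFree_lang_subset (G : CFG T) : G.lambdaFree.lang ⊆ G.lang := fun _ hw =>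
  reflTransGen_closed (fun _ _ => derives_of_rstep_lambdaFreeRules) _ _ hw

theorem CFG.langB_sdiff_nil_subset_lambdaFree (G : CFG T) (k : ℕ) :
    G.langB k \ {[]} ⊆ G.lambdaFree.langB k := by
  rintro w ⟨⟨hk, hw⟩, hne⟩
  obtain ⟨y, hy, hyw⟩ := DerivesB.exists_erasure hw
  obtain rfl | rfl := hy.eq_or_eq_nil_of_singleton
  · exact ⟨hk, hyw⟩
  · obtain h | ⟨z, hz, -⟩ := hyw.cases_head
    · exact absurd (List.map_eq_nil_iff.1 h.symm) hne
    · exact absurd hz.1 not_rstep_nil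

/-! ### Two alternating copies of the nonterminals -/

/-- The sentential form `x` with its nonterminals replaced by their copies of colour `b`. The
copy of `A` of colour `b` is encoded as `2 * A + b`. -/
def color (b : Bool) (x : SForm T) : SForm T :=
  x.map (Sum.map (Nat.bit b) id)

/-- Forgets the colours of the nonterminals of a sentential form. -/
def uncolor (x : SForm T) : SForm T :=
  x.map (Sum.map Nat.div2 id)

@[simp]
theorem color_append : color b (x ++ y) = color b x ++ color b y :=
  List.map_append

@[simp]
theorem uncolor_append : uncolor (x ++ y) = uncolor x ++ uncolor y :=
  List.map_append

@[simp]
theorem color_map_inr (w : List T) : color b (w.map Sum.inr) = w.map Sum.inr := by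
  simp [color]

@[simp]
theorem uncolor_color : uncolor (color b x) = x := by
  simp [uncolor, color, Function.comp_def, Sum.map_map, Nat.div2_bit, ← Function.id_def]

theorem color_ne_nil (h : x ≠ []) : color b x ≠ [] :=
  mt List.map_eq_nil_iff.1 h

/-- The component of colour `b` simulating the rules of `P`. For each rule `A → z` of `P` it has
an idling rule `A_b → A_b`, a recolouring rule `A_b → A_b'` and a simulating rule `A_b → z_b'`,
where `b'` is the other colour. -/
def coloredRules (P : List (Rule T)) (b : Bool) : List (Rule T) :=
  P.flatMap fun r => [color b [Sum.inl r.1], color (!b) [Sum.inl r.1], color (!b) r.2].map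
    fun z => (Nat.bit b r.1, z)

theorem mem_coloredRules : (A, z) ∈ coloredRules P b ↔ ∃ r ∈ P, A = Nat.bit b r.1 ∧
    (z = color b [Sum.inl r.1] ∨ z = color (!b) [Sum.inl r.1] ∨ z = color (!b) r.2) := by
  simp only [coloredRules, List.mem_flatMap, List.mem_map, List.mem_cons, List.not_mem_nil,
    or_false, Prod.mk.injEq]
  constructor
  · rintro ⟨r, hr, z, hz, rfl, rfl⟩
    exact ⟨r, hr, rfl, hz⟩
  · rintro ⟨r, hr, rfl, hz⟩
    exact ⟨r, hr, z, hz, rfl, rfl⟩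

theorem rhs_ne_nil_of_mem_coloredRules (hP : ∀ r ∈ P, r.2 ≠ []) :
    ∀ s ∈ coloredRules P b, s.2 ≠ [] := by
  rintro ⟨A, z⟩ hs
  obtain ⟨r, hr, -, rfl | rfl | rfl⟩ := mem_coloredRules.1 hs
  exacts [color_ne_nil (List.cons_ne_nil _ _), color_ne_nil (List.cons_ne_nil _ _),
    color_ne_nil (hP r hr)]

theorem derives_uncolor_of_rstep (h : RStep (coloredRules P b) x y) :
    Derives P (uncolor x) (uncolor y) := by
  obtain ⟨⟨A, z⟩, hs, u, v, rfl, rfl⟩ := h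
  obtain ⟨r, hr, rfl, hz⟩ := mem_coloredRules.1 hs
  have hlhs : uncolor (u ++ Sum.inl (Nat.bit b r.1) :: v) =
      uncolor u ++ [Sum.inl r.1] ++ uncolor v := by
    simp [uncolor, Nat.div2_bit]
  rw [hlhs, uncolor_append, uncolor_append]
  obtain rfl | rfl | rfl := hz <;> rw [uncolor_color]
  exact .single ⟨r, hr, uncolor u, uncolor v, by simp, rfl⟩

theorem not_rstep_coloredRules_color_not : ¬ RStep (coloredRules P b) (color (!b) x) y := by
  rintro ⟨⟨A, z⟩, hs, u, v, hx, -⟩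
  obtain ⟨r, -, rfl, -⟩ := mem_coloredRules.1 hs
  have hmem : Sum.inl (Nat.bit b r.1) ∈ color (!b) x := by simp [hx]
  obtain ⟨B | a, -, hB⟩ := List.mem_map.1 hmem
  · have hcolor : (!b) = b := by simpa only [Nat.bodd_bit] using congrArg Nat.bodd (Sum.inl.inj hB)
    exact Bool.not_ne_self b hcolor
  · cases hB

theorem rstep_idle (hA : A ∈ P.map Prod.fst) (hAx : Sum.inl A ∈ x) :
    RStep (coloredRules P b) (color b x) (color b x) := by
  obtain ⟨r, hr, rfl⟩ := List.mem_map.1 hA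
  obtain ⟨u, v, rfl⟩ := List.append_of_mem hAx
  exact ⟨(_, _), mem_coloredRules.2 ⟨r, hr, rfl, .inl rfl⟩, color b u, color b v,
    by simp [color], by simp [color]⟩

theorem rstep_recolor (hA : A ∈ P.map Prod.fst) :
    RStep (coloredRules P b) (color b [Sum.inl A]) (color (!b) [Sum.inl A]) := by
  obtain ⟨r, hr, rfl⟩ := List.mem_map.1 hA
  exact ⟨(_, _), mem_coloredRules.2 ⟨r, hr, rfl, .inr (.inl rfl)⟩, [], [], rfl, by simp⟩

theorem rstep_simulate (h : (A, z) ∈ P) :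
    RStep (coloredRules P b) (color b [Sum.inl A]) (color (!b) z) :=
  ⟨(_, _), mem_coloredRules.2 ⟨(A, z), h, rfl, .inr (.inr rfl)⟩, [], [], rfl, by simp⟩

/-- Every nonterminal of the sentential form is the left-hand side of some rule of `P`. Forms from
which a terminal word is derivable have this property. -/
def AllRewritable (P : List (Rule T)) (x : SForm T) : Prop :=
  ∀ A, Sum.inl A ∈ x → A ∈ P.map Prod.fst

theorem Derives.allRewritable {w : List T} (h : Derives P x (w.map Sum.inr)) :
    AllRewritable P x := by
  induction h using ReflTransGen.head_induction_on with
  | refl => intro A hA; simp at hA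
  | head h _ ih =>
    obtain ⟨r, hr, u, v, rfl, rfl⟩ := h
    intro A hA
    obtain hA | hA | hA : Sum.inl A ∈ u ∨ A = r.1 ∨ Sum.inl A ∈ v := by simpa using hA
    · exact ih A (by simp [hA])
    · exact hA ▸ List.mem_map_of_mem hr
    · exact ih A (by simp [hA])

theorem AllRewritable.stepsN_recolor (h : AllRewritable P x) :
    StepsN (coloredRules P b) (ntCount x) (color b x) (color (!b) x) := by
  induction x with
  | nil => rfl
  | cons s x ih =>
    have hx := ih fun A hA => h A (List.mem_cons_of_mem s hA)
    cases s with
    | inl A =>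
      have hA : A ∈ P.map Prod.fst := h A List.mem_cons_self
      rw [ntCount_cons_inl, Nat.add_comm]
      exact (rstep_recolor hA).stepsN_one.append hx
    | inr a =>
      have ha : StepsN (coloredRules P b) 0 [Sum.inr a] [Sum.inr a] := rfl
      rw [ntCount_cons_inr, ← Nat.zero_add (ntCount x)]
      exact ha.append hx

theorem RStep.stepsN_ntCount (h : RStep P x y) (hx : AllRewritable P x) :
    StepsN (coloredRules P b) (ntCount x) (color b x) (color (!b) y) := by
  obtain ⟨r, hr, u, v, rfl, rfl⟩ := h
  have hu : AllRewritable P u := fun A hA => hx A (by simp [hA])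
  have hv : AllRewritable P v := fun A hA => hx A (by simp [hA])
  have hsteps := hu.stepsN_recolor.append
    ((rstep_simulate (b := b) hr).stepsN_one.append hv.stepsN_recolor)
  simpa [← color_append, Nat.add_comm] using hsteps

theorem RStep.stepsN_coloredRules (h : RStep P x y) (hx : AllRewritable P x)
    (hk : ntCount x ≤ k) : StepsN (coloredRules P b) k (color b x) (color (!b) y) := by
  have hidle : RStep (coloredRules P b) (color b x) (color b x) := by
    obtain ⟨r, hr, u, v, rfl, -⟩ := h
    exact rstep_idle (List.mem_map_of_mem hr) (by simp)
  have hsteps := (hidle.stepsN_self (k - ntCount x)).trans (h.stepsN_ntCount hx)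
  rwa [Nat.sub_add_cancel hk] at hsteps

/-- The CD grammar system whose two components carry out the steps of `G` in turn, starting with
colour `false`. -/
def CFG.alternating (G : CFG T) : CDGS T :=
  ⟨2, Nat.bit false G.start, fun i => coloredRules G.rules (finTwoEquiv i)⟩

theorem CFG.alternating_lamFree {G : CFG T} (hG : ∀ r ∈ G.rules, r.2 ≠ []) :
    G.alternating.LamFree := fun _ =>
  rhs_ne_nil_of_mem_coloredRules hG

theorem CFG.alternating_lang_subset (G : CFG T) (f : Mode) : G.alternating.lang f ⊆ G.lang := by
  intro w hw
  have hstep (x y : SForm T) (h : G.alternating.ModeStep f x y) :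
      Derives G.rules (uncolor x) (uncolor y) := by
    obtain ⟨i, m, h, -⟩ := h
    exact ReflTransGen.lift' uncolor (fun _ _ => derives_uncolor_of_rstep) x y h.derives
  have hderiv : Derives G.rules (uncolor (color false [Sum.inl G.start]))
      (uncolor (color false (w.map Sum.inr))) := by
    rw [color_map_inr]
    exact ReflTransGen.lift' uncolor hstep _ _ hw.to_reflTransGen
  rwa [uncolor_color, uncolor_color] at hderiv

theorem CFG.alternating_modeStep {G : CFG T} {f : Mode}
    (hf : ∀ (P : List (Rule T)) (y : SForm T), modeOK P f k y) (h : RStep G.rules x y)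
    (hx : AllRewritable G.rules x) (hk : ntCount x ≤ k) :
    G.alternating.ModeStep (.conj .t f) (color b x) (color (!b) y) := by
  obtain ⟨i, rfl⟩ := finTwoEquiv.surjective b
  exact ⟨i, k, h.stepsN_coloredRules hx hk,
    fun ⟨_, hz⟩ => not_rstep_coloredRules_color_not hz, hf _ _⟩

theorem CFG.langB_subset_alternating_lang (G : CFG T) {f : Mode}
    (hf : ∀ (P : List (Rule T)) (y : SForm T), modeOK P f k y) :
    G.langB k ⊆ G.alternating.lang (.conj .t f) := by
  rintro w ⟨hk, hw⟩
  suffices h : ∀ x, DerivesB G.rules k x (w.map Sum.inr) → ntCount x ≤ k → ∀ b,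
      ReflTransGen (G.alternating.ModeStep (.conj .t f)) (color b x) (w.map Sum.inr) by
    obtain heq | hlang := reflTransGen_iff_eq_or_transGen.1 (h _ hw hk false)
    · cases w <;> simp [color] at heq
    · exact hlang
  intro x hx
  induction hx using ReflTransGen.head_induction_on with
  | refl => exact fun _ b => by rw [color_map_inr]
  | head h htail ih =>
    intro hx b
    have hrew := Derives.allRewritable (.head h.1 (DerivesB.derives htail))
    exact .head (CFG.alternating_modeStep hf h.1 hrew hx) (ih h.2 (!b))

theorem stmt2_general (lf : Bool) (k : ℕ) (f : Mode)
    (hf : ∀ (P : List (Rule T)) (y : SForm T), modeOK P f k y) :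
    CFFamInd T k ⊆ CDFam T lf 2 (.conj .t f) := by
  rintro L ⟨G, hL, hB⟩
  refine ⟨G.lambdaFree.alternating, le_rfl,
    fun _ => CFG.alternating_lamFree G.lambdaFree_rhs_ne_nil, .trans ?_ hL⟩
  apply Set.Subset.antisymm
  · exact Set.sdiff_subset_sdiff_left
      ((G.lambdaFree.alternating_lang_subset _).trans G.lambdaFree_lang_subset)
  · exact fun w ⟨hw, hne⟩ => ⟨G.lambdaFree.langB_subset_alternating_lang hf
      (G.langB_sdiff_nil_subset_lambdaFree k ⟨hB hw, hne⟩), hne⟩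

end

/-- For every k ≥ 1 and every Δ ∈ {≤, =},
L_k(CF) ⊆ L(CD_2, CF[−λ], (t∧Δk)), both with and without erasing rules. -/
theorem stmt2 (lf : Bool) (k : ℕ) (hk : 1 ≤ k) (d : ℕ → Mode)
    (hd : d = Mode.le ∨ d = Mode.eq) :
    CFFamInd ℕ k ⊆ CDFam ℕ lf 2 (Mode.conj Mode.t (d k)) := by
  obtain rfl | rfl := hd
  · exact stmt2_general lf k _ fun _ _ => le_refl k
  · exact stmt2_general lf k _ fun _ _ => rfl

end CDHybrid
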